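/- Let 𝔼 : M_n(ℂ) → M_m(ℂ) be a unital positive linear map, let f be a doubly concave function on an interval Ω ⊆ [0,∞) that is moreover monotone (non-decreasing or non-increasing) on Ω, let Z be an n×n Hermitian matrix with all eigenvalues in Ω, and let p ∈ (0,1]. Then there exists a unitary V ∈ M_m(ℂ) such that f(𝔼_p(Z)) ≥ V 𝔼_p(f(Z)) V* in the positive semidefinite (Loewner) order. -/

import Mathlib

open scoped ComplexOrder

section Defs

variable {n : ℕ}

/-- eigenvalues of a Hermitian matrix listed in increasing order -/
noncomputable def eigUp {A : Matrix (Fin n) (Fin n) ℂ} (hA : A.IsHermitian) : Fin n → ℝ :=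
  fun i => hA.eigenvalues (Tuple.sort hA.eigenvalues i)

/-- eigenvalues of a Hermitian matrix listed in decreasing order: `eigDown hA i = μ_{i+1}(A)` -/
noncomputable def eigDown {A : Matrix (Fin n) (Fin n) ℂ} (hA : A.IsHermitian) : Fin n → ℝ :=
  fun i => eigUp hA i.rev

/-- the product of the `k` smallest eigenvalues, `∏_{j=1}^k μ_{n+1-j}(A)` -/
noncomputable def prodSmall (A : Matrix (Fin n) (Fin n) ℂ) (k : ℕ) : ℝ :=
  if hA : A.IsHermitian then
    ∏ i ∈ Finset.univ.filter (fun i : Fin n => (i : ℕ) < k), eigUp hA i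
  else 0

/-- the product of the `k` largest eigenvalues, `∏_{j=1}^k μ_j(A)` -/
noncomputable def prodLarge (A : Matrix (Fin n) (Fin n) ℂ) (k : ℕ) : ℝ :=
  if hA : A.IsHermitian then
    ∏ i ∈ Finset.univ.filter (fun i : Fin n => (i : ℕ) < k), eigDown hA i
  else 0

/-- the sum of the `k` smallest eigenvalues, `∑_{j=1}^k μ_{n+1-j}(A)` -/
noncomputable def sumSmall (A : Matrix (Fin n) (Fin n) ℂ) (k : ℕ) : ℝ :=
  if hA : A.IsHermitian then
    ∑ i ∈ Finset.univ.filter (fun i : Fin n => (i : ℕ) < k), eigUp hA i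
  else 0

/-- A doubly concave function on an interval `Ω ⊆ [0,∞)`. -/
structure DoublyConcaveOn (f : ℝ → ℝ) (Ω : Set ℝ) : Prop where
  subset_Ici : Ω ⊆ Set.Ici (0 : ℝ)
  nonneg : ∀ x ∈ Ω, 0 ≤ f x
  continuousOn : ContinuousOn f Ω
  concaveOn : ConcaveOn ℝ Ω f
  geomConcave : ∀ x ∈ Ω, ∀ y ∈ Ω, Real.sqrt (f x * f y) ≤ f (Real.sqrt (x * y))

/-- `𝔼_p(Z) := (𝔼(Z^p))^{1/p}` -/
noncomputable def Ep {n m : ℕ} (E : Matrix (Fin n) (Fin n) ℂ →ₗ[ℂ] Matrix (Fin m) (Fin m) ℂ)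
    (p : ℝ) (Z : Matrix (Fin n) (Fin n) ℂ) : Matrix (Fin m) (Fin m) ℂ :=
  cfc (fun x : ℝ => x ^ (1 / p)) (E (cfc (fun x : ℝ => x ^ p) Z))

/-- the power `p`-mean `A β_p B := ((A^p + B^p)/2)^{1/p}` -/
noncomputable def betaP (p : ℝ) (A B : Matrix (Fin n) (Fin n) ℂ) : Matrix (Fin n) (Fin n) ℂ :=
  cfc (fun x : ℝ => x ^ (1 / p))
    ((2 : ℂ)⁻¹ • (cfc (fun x : ℝ => x ^ p) A + cfc (fun x : ℝ => x ^ p) B))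

noncomputable def sqrtM (A : Matrix (Fin n) (Fin n) ℂ) : Matrix (Fin n) (Fin n) ℂ :=
  cfc Real.sqrt A

noncomputable def invSqrtM (A : Matrix (Fin n) (Fin n) ℂ) : Matrix (Fin n) (Fin n) ℂ :=
  cfc (fun x : ℝ => (Real.sqrt x)⁻¹) A

/-- operator mean with representing function `h`: `A σ B = A^{1/2} h(A^{-1/2} B A^{-1/2}) A^{1/2}` -/
noncomputable def opMean (h : ℝ → ℝ) (A B : Matrix (Fin n) (Fin n) ℂ) :
    Matrix (Fin n) (Fin n) ℂ :=
  sqrtM A * cfc h (invSqrtM A * B * invSqrtM A) * sqrtM A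

/-- the weighted geometric mean `A #_α B` -/
noncomputable def sharp (α : ℝ) (A B : Matrix (Fin n) (Fin n) ℂ) : Matrix (Fin n) (Fin n) ℂ :=
  sqrtM A * cfc (fun x : ℝ => x ^ α) (invSqrtM A * B * invSqrtM A) * sqrtM A

/-- the (real) determinant of a Hermitian matrix -/
noncomputable def rdet (A : Matrix (Fin n) (Fin n) ℂ) : ℝ := (A.det).re

open Classical in
/-- the derived anti-norm `‖A‖_! = ‖A^{-p}‖^{-1/p}` for invertible positive `A`, `0` otherwise. -/
noncomputable def derivedAntiNorm (N : Matrix (Fin n) (Fin n) ℂ → ℝ) (p : ℝ)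
    (A : Matrix (Fin n) (Fin n) ℂ) : ℝ :=
  if IsUnit A.det then (N (cfc (fun x : ℝ => x ^ (-p)) A)) ^ (-(1 / p)) else 0

end Defs

/-!
For a doubly concave `f`, the function `g t = f (t ^ (1 / p)) ^ p` is concave, that is, `f` maps a
power mean of `x ≤ y` above the power mean of `f x` and `f y`. If `f y ≤ f x`, this follows from
concavity of `f` and the comparison of power and arithmetic means. Otherwise concavity puts `f`
above its chord and geometric concavity puts it above the function `t ↦ C * t ^ d` agreeing with `f`
at `x` and `y`: the chord suffices, by the reverse Minkowski inequality, when `f t / t` is larger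
at `y` than at `x`, and the power function suffices otherwise, because then `0 ≤ d ≤ 1`.

With `A = Z ^ p`, Jensen's inequality for the states `X ↦ ⟪x, 𝔼 X x⟫` then gives
`⟪x, 𝔼 (g A) x⟫ ≤ g ⟪x, 𝔼 A x⟫` for all unit vectors `x`. As `g` is monotone, its sublevel sets are
convex, so a dimension count and Hall's theorem match the eigenvalues of `𝔼 (g A)` with larger
values of `g` at eigenvalues of `𝔼 A`. Taking `1 / p`-th powers preserves this domination, which
is what the unitary expresses.
-/

open Set

section PowerMean

variable {p a b c d x y u v : ℝ}

theorem rpow_rpow_comm (hx : 0 ≤ x) (a b : ℝ) : (x ^ a) ^ b = (x ^ b) ^ a := by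
  rw [← Real.rpow_mul hx, mul_comm, Real.rpow_mul hx]

/-- The weighted power mean `(a x ^ p + b y ^ p) ^ (1 / p)` of two numbers. It is meant for `p ≠ 0`
and nonnegative `a`, `b`, `x`, `y`; the weights need not sum to `1`. -/
noncomputable def powerMean (p a b x y : ℝ) : ℝ :=
  (a * x ^ p + b * y ^ p) ^ (1 / p)

theorem powerMean_nonneg (ha : 0 ≤ a) (hb : 0 ≤ b) (hx : 0 ≤ x) (hy : 0 ≤ y) :
    0 ≤ powerMean p a b x y := by
  unfold powerMean
  positivity

theorem powerMean_rpow (hp : p ≠ 0) (ha : 0 ≤ a) (hb : 0 ≤ b) (hx : 0 ≤ x) (hy : 0 ≤ y) :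
    powerMean p a b x y ^ p = a * x ^ p + b * y ^ p := by
  rw [powerMean, ← Real.rpow_mul (by positivity), one_div_mul_cancel hp, Real.rpow_one]

theorem powerMean_mem_Icc (hp : 0 < p) (ha : 0 ≤ a) (hb : 0 ≤ b) (hab : a + b = 1) (hx : 0 ≤ x)
    (hxy : x ≤ y) : powerMean p a b x y ∈ Icc x y := by
  have hy : 0 ≤ y := hx.trans hxy
  have hz := powerMean_nonneg (p := p) ha hb hx hy
  have hpow : x ^ p ≤ y ^ p := Real.rpow_le_rpow hx hxy hp.le
  rw [mem_Icc, ← Real.rpow_le_rpow_iff hx hz hp, ← Real.rpow_le_rpow_iff hz hy hp,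
    powerMean_rpow hp.ne' ha hb hx hy]
  obtain rfl : a = 1 - b := by linarith
  constructor <;> nlinarith

theorem powerMean_le_arith_mean (hp0 : 0 < p) (hp1 : p ≤ 1) (ha : 0 ≤ a) (hb : 0 ≤ b)
    (hab : a + b = 1) (hx : 0 ≤ x) (hy : 0 ≤ y) : powerMean p a b x y ≤ a * x + b * y := by
  rw [← Real.rpow_le_rpow_iff (powerMean_nonneg ha hb hx hy) (by positivity) hp0,
    powerMean_rpow hp0.ne' ha hb hx hy]
  exact (Real.concaveOn_rpow hp0.le hp1).2 hx hy ha hb hab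

theorem powerMean_const_mul (hp : p ≠ 0) (ha : 0 ≤ a) (hb : 0 ≤ b) (hc : 0 ≤ c) (hx : 0 ≤ x)
    (hy : 0 ≤ y) : powerMean p a b (c * x) (c * y) = c * powerMean p a b x y := by
  rw [powerMean, powerMean, Real.mul_rpow hc hx, Real.mul_rpow hc hy,
    show a * (c ^ p * x ^ p) + b * (c ^ p * y ^ p) = c ^ p * (a * x ^ p + b * y ^ p) by ring,
    Real.mul_rpow (by positivity) (by positivity), ← Real.rpow_mul hc, mul_one_div_cancel hp,
    Real.rpow_one]

theorem powerMean_rpow_le_rpow_powerMean (hp : 0 < p) (hd0 : 0 ≤ d) (hd1 : d ≤ 1) (ha : 0 ≤ a)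
    (hb : 0 ≤ b) (hab : a + b = 1) (hx : 0 ≤ x) (hy : 0 ≤ y) :
    powerMean p a b (x ^ d) (y ^ d) ≤ powerMean p a b x y ^ d := by
  have hz := powerMean_nonneg (p := p) ha hb hx hy
  rw [← Real.rpow_le_rpow_iff (powerMean_nonneg ha hb (by positivity) (by positivity))
    (by positivity) hp, powerMean_rpow hp.ne' ha hb (by positivity) (by positivity),
    rpow_rpow_comm hx, rpow_rpow_comm hy, rpow_rpow_comm hz,
    powerMean_rpow hp.ne' ha hb hx hy]
  exact (Real.concaveOn_rpow hd0 hd1).2 (Real.rpow_nonneg hx p) (Real.rpow_nonneg hy p) ha hb hab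

-- The function is the `ℓ^q` norm of the vector `(t, c)`.
theorem convexOn_rpow_add_rpow_const_rpow_one_div {q : ℝ} (hq : 1 ≤ q) (hc : 0 ≤ c) :
    ConvexOn ℝ (Ici 0) fun t : ℝ => (t ^ q + c ^ q) ^ (1 / q) := by
  have hq0 : q ≠ 0 := (zero_lt_one.trans_le hq).ne'
  have homog : ∀ {a t : ℝ}, 0 ≤ a → 0 ≤ t →
      ((a * t) ^ q + (a * c) ^ q) ^ (1 / q) = a * (t ^ q + c ^ q) ^ (1 / q) := by
    intro a t ha ht
    rw [Real.mul_rpow ha ht, Real.mul_rpow ha hc, ← mul_add,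
      Real.mul_rpow (by positivity) (by positivity), ← Real.rpow_mul ha, mul_one_div_cancel hq0,
      Real.rpow_one]
  refine ⟨convex_Ici 0, fun s hs t ht a b ha hb hab => ?_⟩
  rw [mem_Ici] at hs ht
  have minkowski := Real.Lp_add_le_of_nonneg (Finset.univ : Finset (Fin 2)) hq
    (f := ![a * s, a * c]) (g := ![b * t, b * c])
    (Fin.forall_fin_two.2 ⟨fun _ => mul_nonneg ha hs, fun _ => mul_nonneg ha hc⟩)
    (Fin.forall_fin_two.2 ⟨fun _ => mul_nonneg hb ht, fun _ => mul_nonneg hb hc⟩)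
  simp only [Fin.sum_univ_two, Matrix.cons_val_zero, Matrix.cons_val_one, ← add_mul, hab, one_mul]
    at minkowski
  rwa [homog ha hs, homog hb ht] at minkowski

theorem powerMean_add_const_le (hp0 : 0 < p) (hp1 : p ≤ 1) (ha : 0 ≤ a) (hb : 0 ≤ b)
    (hab : a + b = 1) (hu : 0 ≤ u) (hv : 0 ≤ v) (hc : 0 ≤ c) :
    powerMean p a b u v + c ≤ powerMean p a b (u + c) (v + c) := by
  have hM := powerMean_nonneg (p := p) ha hb hu hv
  have hconv := (convexOn_rpow_add_rpow_const_rpow_one_div ((one_le_div hp0).2 hp1)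
    (Real.rpow_nonneg hc p)).2 (Real.rpow_nonneg hu p) (Real.rpow_nonneg hv p) ha hb hab
  simp only [smul_eq_mul, ← powerMean_rpow hp0.ne' ha hb hu hv, one_div, inv_inv,
    Real.rpow_rpow_inv hu hp0.ne', Real.rpow_rpow_inv hv hp0.ne', Real.rpow_rpow_inv hc hp0.ne',
    Real.rpow_rpow_inv hM hp0.ne'] at hconv
  rwa [← Real.rpow_le_rpow_iff (by positivity)
    (powerMean_nonneg ha hb (by positivity) (by positivity)) hp0,
    powerMean_rpow hp0.ne' ha hb (by positivity) (by positivity)]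

end PowerMean

theorem ordConnected_of_isClosed_of_forall_exists_between {α : Type*}
    [ConditionallyCompleteLinearOrder α] [TopologicalSpace α] [OrderTopology α] {K : Set α}
    (hK : IsClosed K) (hbetween : ∀ x ∈ K, ∀ y ∈ K, x < y → ∃ z ∈ K, x < z ∧ z < y) :
    K.OrdConnected := by
  refine ⟨fun x hx y hy u hu => ?_⟩
  have hbelow : BddAbove (K ∩ Icc x u) := bddAbove_Icc.mono inter_subset_right
  have habove : BddBelow (K ∩ Icc u y) := bddBelow_Icc.mono inter_subset_right
  have hl : sSup (K ∩ Icc x u) ∈ K ∩ Icc x u :=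
    (hK.inter isClosed_Icc).csSup_mem ⟨x, hx, left_mem_Icc.2 hu.1⟩ hbelow
  have hr : sInf (K ∩ Icc u y) ∈ K ∩ Icc u y :=
    (hK.inter isClosed_Icc).csInf_mem ⟨y, hy, right_mem_Icc.2 hu.2⟩ habove
  by_contra huK
  obtain ⟨z, hzK, hlz, hzr⟩ := hbetween _ hl.1 _ hr.1 <|
    (hl.2.2.lt_of_ne fun h => huK (h ▸ hl.1)).trans (hr.2.1.lt_of_ne fun h => huK (h ▸ hr.1))
  rcases le_total z u with hzu | huz
  · exact hlz.not_ge (le_csSup hbelow ⟨hzK, hl.2.1.trans hlz.le, hzu⟩)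
  · exact hzr.not_ge (csInf_le habove ⟨hzK, huz, hzr.le.trans hr.2.2⟩)

theorem affine_le_of_concaveOn {f : ℝ → ℝ} {Ω : Set ℝ} (hf : ConcaveOn ℝ Ω f) {k c x y u : ℝ}
    (hx : x ∈ Ω) (hy : y ∈ Ω) (hfx : k * x + c ≤ f x) (hfy : k * y + c ≤ f y) (hu : u ∈ Icc x y) :
    k * u + c ≤ f u := by
  have hsub : ConcaveOn ℝ Ω fun t => f t - (k * t + c) :=
    hf.sub (((LinearMap.mulLeft ℝ k).convexOn hf.1).add_const c)
  have := hsub.min_le_of_mem_Icc hx hy hu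
  linarith [(le_min (sub_nonneg.2 hfx) (sub_nonneg.2 hfy)).trans this]

namespace DoublyConcaveOn

variable {f : ℝ → ℝ} {Ω : Set ℝ} {p a b x y : ℝ}

-- The set `K` below is closed and contains the geometric mean of any two of its points, so it is
-- an interval.
theorem const_mul_rpow_le (hf : DoublyConcaveOn f Ω) {C d u : ℝ} (hC : 0 ≤ C) (hx0 : 0 < x)
    (hx : x ∈ Ω) (hy : y ∈ Ω) (hfx : C * x ^ d ≤ f x) (hfy : C * y ^ d ≤ f y) (hu : u ∈ Icc x y) :
    C * u ^ d ≤ f u := by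
  have hΩ : Icc x y ⊆ Ω := hf.concaveOn.1.ordConnected.out hx hy
  have hpos : ∀ t ∈ Icc x y, 0 < t := fun t ht => hx0.trans_le ht.1
  have hxy : x ≤ y := hu.1.trans hu.2
  let K : Set ℝ := {t ∈ Icc x y | C * t ^ d ≤ f t}
  have hK : IsClosed K := by
    refine isClosed_Icc.isClosed_le (continuousOn_const.mul ?_) (hf.continuousOn.mono hΩ)
    exact continuousOn_id.rpow_const fun t ht => Or.inl (hpos t ht).ne'
  suffices hKconn : K.OrdConnected from
    (hKconn.out ⟨left_mem_Icc.2 hxy, hfx⟩ ⟨right_mem_Icc.2 hxy, hfy⟩ hu).2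
  refine ordConnected_of_isClosed_of_forall_exists_between hK fun s hs t ht hst => ?_
  have hs0 := hpos s hs.1
  have ht0 := hpos t ht.1
  have hlt : s < √(s * t) := Real.lt_sqrt_of_sq_lt (by nlinarith)
  have hgt : √(s * t) < t := (Real.sqrt_lt' ht0).2 (by nlinarith)
  refine ⟨√(s * t), ⟨⟨hs.1.1.trans hlt.le, hgt.le.trans ht.1.2⟩, ?_⟩, hlt, hgt⟩
  calc C * √(s * t) ^ d = √((C * s ^ d) * (C * t ^ d)) := by
        rw [mul_mul_mul_comm, ← Real.mul_rpow hs0.le ht0.le, Real.sqrt_mul (mul_self_nonneg C),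
          Real.sqrt_mul_self hC, Real.sqrt_eq_rpow, Real.sqrt_eq_rpow,
          rpow_rpow_comm (by positivity)]
    _ ≤ √(f s * f t) := Real.sqrt_le_sqrt <| mul_le_mul hs.2 ht.2
        (by positivity) (hf.nonneg s (hΩ hs.1))
    _ ≤ f √(s * t) := hf.geomConcave s (hΩ hs.1) t (hΩ ht.1)

theorem powerMean_map_le_of_map_ge (hf : DoublyConcaveOn f Ω) (hp0 : 0 < p) (hp1 : p ≤ 1)
    (ha : 0 ≤ a) (hb : 0 ≤ b) (hab : a + b = 1) (hx : x ∈ Ω) (hy : y ∈ Ω) (hxy : x ≤ y)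
    (hfxy : f y ≤ f x) : powerMean p a b (f x) (f y) ≤ f (powerMean p a b x y) := by
  have hx0 : 0 ≤ x := hf.subset_Ici hx
  have hy0 : 0 ≤ y := hf.subset_Ici hy
  have hz := powerMean_mem_Icc hp0 ha hb hab hx0 hxy
  have hzw := powerMean_le_arith_mean hp0 hp1 ha hb hab hx0 hy0
  have hfw : a * f x + b * f y ≤ f (a * x + b * y) := hf.concaveOn.2 hx hy ha hb hab
  have hfx : a * f x + b * f y ≤ f x := by
    obtain rfl : a = 1 - b := by linarith
    nlinarith
  calc powerMean p a b (f x) (f y) ≤ a * f x + b * f y :=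
        powerMean_le_arith_mean hp0 hp1 ha hb hab (hf.nonneg x hx) (hf.nonneg y hy)
    _ ≤ min (f x) (f (a * x + b * y)) := le_min hfx hfw
    _ ≤ f (powerMean p a b x y) :=
        hf.concaveOn.min_le_of_mem_Icc hx (hf.concaveOn.1 hx hy ha hb hab) ⟨hz.1, hzw⟩

-- The chord through `(x, f x)` and `(y, f y)` is `t ↦ k * t - c` with `k, c ≥ 0`.
theorem powerMean_map_le_of_mul_le_mul (hf : DoublyConcaveOn f Ω) (hp0 : 0 < p) (hp1 : p ≤ 1)
    (ha : 0 ≤ a) (hb : 0 ≤ b) (hab : a + b = 1) (hx : x ∈ Ω) (hy : y ∈ Ω) (hxy : x < y)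
    (hfxy : f x ≤ f y) (hslope : f x * y ≤ f y * x) :
    powerMean p a b (f x) (f y) ≤ f (powerMean p a b x y) := by
  have hx0 : 0 ≤ x := hf.subset_Ici hx
  have hy0 : 0 ≤ y := hf.subset_Ici hy
  have hyx : 0 < y - x := sub_pos.2 hxy
  obtain ⟨k, hk⟩ : ∃ k, k = (f y - f x) / (y - x) := ⟨_, rfl⟩
  obtain ⟨c, hc⟩ : ∃ c, c = (f y * x - f x * y) / (y - x) := ⟨_, rfl⟩
  have hk0 : 0 ≤ k := hk ▸ div_nonneg (sub_nonneg.2 hfxy) hyx.le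
  have hc0 : 0 ≤ c := hc ▸ div_nonneg (sub_nonneg.2 hslope) hyx.le
  have hxk : f x + c = k * x := by rw [hk, hc]; field_simp; ring
  have hyk : f y + c = k * y := by rw [hk, hc]; field_simp; ring
  have hchord : k * powerMean p a b x y + -c ≤ f (powerMean p a b x y) :=
    affine_le_of_concaveOn hf.concaveOn hx hy (by linarith) (by linarith)
      (powerMean_mem_Icc hp0 ha hb hab hx0 hxy.le)
  have hshift := powerMean_add_const_le hp0 hp1 ha hb hab (hf.nonneg x hx) (hf.nonneg y hy) hc0
  rw [hxk, hyk, powerMean_const_mul hp0.ne' ha hb hk0 hx0 hy0] at hshift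
  linarith

theorem powerMean_map_le_of_mul_ge_mul (hf : DoublyConcaveOn f Ω) (hp : 0 < p) (ha : 0 ≤ a)
    (hb : 0 ≤ b) (hab : a + b = 1) (hx : x ∈ Ω) (hy : y ∈ Ω) (hx0 : 0 < x) (hxy : x < y)
    (hfx : 0 < f x) (hfxy : f x ≤ f y) (hslope : f y * x ≤ f x * y) :
    powerMean p a b (f x) (f y) ≤ f (powerMean p a b x y) := by
  have hy0 : 0 < y := hx0.trans hxy
  have hfy : 0 < f y := hfx.trans_le hfxy
  have hlog : 0 < Real.log (y / x) := Real.log_pos ((one_lt_div hx0).2 hxy)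
  obtain ⟨d, hd⟩ : ∃ d, d = Real.log (f y / f x) / Real.log (y / x) := ⟨_, rfl⟩
  have hd0 : 0 ≤ d := hd ▸ div_nonneg (Real.log_nonneg ((one_le_div hfx).2 hfxy)) hlog.le
  have hd1 : d ≤ 1 := by
    rw [hd, div_le_one hlog]
    exact Real.log_le_log (by positivity) ((div_le_div_iff₀ hfx hx0).2 (by linarith))
  obtain ⟨C, hC⟩ : ∃ C, C = f x / x ^ d := ⟨_, rfl⟩
  have hC0 : 0 ≤ C := hC ▸ by positivity
  have hxC : f x = C * x ^ d := by rw [hC]; field_simp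
  have hyC : f y = C * y ^ d := by
    have hratio : (y / x) ^ d = f y / f x := by
      rw [Real.rpow_def_of_pos (by positivity), hd, mul_div_cancel₀ _ hlog.ne',
        Real.exp_log (by positivity)]
    rw [hC, div_mul_eq_mul_div, mul_div_assoc, ← Real.div_rpow hy0.le hx0.le, hratio]
    field_simp
  calc powerMean p a b (f x) (f y) = C * powerMean p a b (x ^ d) (y ^ d) := by
        rw [hxC, hyC, powerMean_const_mul hp.ne' ha hb hC0 (by positivity) (by positivity)]
    _ ≤ C * powerMean p a b x y ^ d := mul_le_mul_of_nonneg_left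
        (powerMean_rpow_le_rpow_powerMean hp hd0 hd1 ha hb hab hx0.le hy0.le) hC0
    _ ≤ f (powerMean p a b x y) := hf.const_mul_rpow_le hC0 hx0 hx hy hxC.ge hyC.ge
        (powerMean_mem_Icc hp ha hb hab hx0.le hxy.le)

theorem powerMean_map_le_map_powerMean (hf : DoublyConcaveOn f Ω) (hp0 : 0 < p) (hp1 : p ≤ 1)
    (ha : 0 ≤ a) (hb : 0 ≤ b) (hab : a + b = 1) (hx : x ∈ Ω) (hy : y ∈ Ω) (hxy : x ≤ y) :
    powerMean p a b (f x) (f y) ≤ f (powerMean p a b x y) := by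
  rcases le_or_gt (f y) (f x) with hdec | hinc
  · exact hf.powerMean_map_le_of_map_ge hp0 hp1 ha hb hab hx hy hxy hdec
  have hxy' : x < y := hxy.lt_of_ne (by rintro rfl; exact hinc.false)
  rcases le_or_gt (f x * y) (f y * x) with hfast | hslow
  · exact hf.powerMean_map_le_of_mul_le_mul hp0 hp1 ha hb hab hx hy hxy' hinc.le hfast
  have hx0 : 0 ≤ x := hf.subset_Ici hx
  have hfx : 0 < f x := by
    refine pos_of_mul_pos_left (lt_of_le_of_lt (mul_nonneg (hf.nonneg y hy) hx0) hslow) ?_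
    exact hx0.trans hxy
  have hx0' : 0 < x := by
    refine hx0.lt_of_ne fun h => ?_
    subst h
    have hsqrt := hf.geomConcave 0 hx y hy
    rw [zero_mul, Real.sqrt_zero, Real.sqrt_le_left hfx.le] at hsqrt
    nlinarith
  exact hf.powerMean_map_le_of_mul_ge_mul hp0 ha hb hab hx hy hx0' hxy' hfx hinc.le hslow.le

end DoublyConcaveOn

section RpowConj

/-- The interval `Ω` read in the variable `t = x ^ p`. -/
def rpowDomain (p : ℝ) (Ω : Set ℝ) : Set ℝ :=
  {t | 0 ≤ t ∧ t ^ (1 / p) ∈ Ω}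

/-- The function `f` conjugated by `x ↦ x ^ p`: if `y = f x`, it sends `x ^ p` to `y ^ p`. -/
noncomputable def rpowConj (p : ℝ) (f : ℝ → ℝ) (t : ℝ) : ℝ :=
  f (t ^ (1 / p)) ^ p

variable {f : ℝ → ℝ} {Ω : Set ℝ} {p : ℝ}

theorem convex_rpowDomain (hp : 0 < p) (hΩ : Convex ℝ Ω) : Convex ℝ (rpowDomain p Ω) := by
  refine OrdConnected.convex ⟨fun s hs t ht u hu => ?_⟩
  have hp' : 0 ≤ 1 / p := by positivity
  have hu0 : 0 ≤ u := hs.1.trans hu.1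
  exact ⟨hu0, hΩ.ordConnected.out hs.2 ht.2
    ⟨Real.rpow_le_rpow hs.1 hu.1 hp', Real.rpow_le_rpow hu0 hu.2 hp'⟩⟩

theorem rpow_mem_rpowDomain {x : ℝ} (hp : p ≠ 0) (hx : 0 ≤ x) (hxΩ : x ∈ Ω) :
    x ^ p ∈ rpowDomain p Ω :=
  ⟨Real.rpow_nonneg hx p, by rwa [one_div, Real.rpow_rpow_inv hx hp]⟩

theorem rpowConj_rpow {x : ℝ} (hp : p ≠ 0) (hx : 0 ≤ x) : rpowConj p f (x ^ p) = f x ^ p := by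
  rw [rpowConj, one_div, Real.rpow_rpow_inv hx hp]

namespace DoublyConcaveOn

theorem rpowConj_rpow_one_div (hf : DoublyConcaveOn f Ω) (hp : p ≠ 0) {t : ℝ}
    (ht : t ∈ rpowDomain p Ω) : rpowConj p f t ^ (1 / p) = f (t ^ (1 / p)) := by
  rw [rpowConj, one_div, Real.rpow_rpow_inv (hf.nonneg _ (one_div p ▸ ht.2)) hp]

theorem concaveOn_rpowConj (hf : DoublyConcaveOn f Ω) (hp0 : 0 < p) (hp1 : p ≤ 1) :
    ConcaveOn ℝ (rpowDomain p Ω) (rpowConj p f) := by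
  refine LinearOrder.concaveOn_of_lt (convex_rpowDomain hp0 hf.concaveOn.1) ?_
  intro s hs t ht hst a b ha hb hab
  have hmean := hf.powerMean_map_le_map_powerMean hp0 hp1 ha.le hb.le hab hs.2 ht.2
    (Real.rpow_le_rpow hs.1 hst.le (by positivity))
  have hfs := hf.nonneg _ hs.2
  have hft := hf.nonneg _ ht.2
  calc a * f (s ^ (1 / p)) ^ p + b * f (t ^ (1 / p)) ^ p
      = powerMean p a b (f (s ^ (1 / p))) (f (t ^ (1 / p))) ^ p :=
        (powerMean_rpow hp0.ne' ha.le hb.le hfs hft).symm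
    _ ≤ f (powerMean p a b (s ^ (1 / p)) (t ^ (1 / p))) ^ p :=
        Real.rpow_le_rpow (powerMean_nonneg ha.le hb.le hfs hft) hmean hp0.le
    _ = rpowConj p f (a * s + b * t) := by
        rw [rpowConj, powerMean, one_div, Real.rpow_inv_rpow hs.1 hp0.ne',
          Real.rpow_inv_rpow ht.1 hp0.ne']

theorem quasiconvexOn_rpowConj (hf : DoublyConcaveOn f Ω) (hp : 0 < p)
    (hmono : MonotoneOn f Ω ∨ AntitoneOn f Ω) :
    QuasiconvexOn ℝ (rpowDomain p Ω) (rpowConj p f) := by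
  have hconv := convex_rpowDomain hp hf.concaveOn.1
  have hp' : 0 ≤ 1 / p := by positivity
  rcases hmono with hmono | hanti
  · refine MonotoneOn.quasiconvexOn (fun s hs t ht hst => ?_) hconv
    exact Real.rpow_le_rpow (hf.nonneg _ hs.2)
      (hmono hs.2 ht.2 (Real.rpow_le_rpow hs.1 hst hp')) hp.le
  · refine AntitoneOn.quasiconvexOn (fun s hs t ht hst => ?_) hconv
    exact Real.rpow_le_rpow (hf.nonneg _ ht.2)
      (hanti hs.2 ht.2 (Real.rpow_le_rpow hs.1 hst hp')) hp.le

end DoublyConcaveOn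

end RpowConj

theorem finrank_span_image_of_linearIndependent {ι 𝕜 V : Type*} [DivisionRing 𝕜] [AddCommGroup V]
    [Module 𝕜 V] {b : ι → V} (hb : LinearIndependent 𝕜 b) (s : Finset ι) :
    Module.finrank 𝕜 (Submodule.span 𝕜 (b '' s)) = s.card := by
  rw [image_eq_range]
  exact (finrank_span_eq_card (hb.comp _ Subtype.val_injective)).trans (Fintype.card_coe s)

section RayleighQuotient

open scoped InnerProductSpace

variable {ι 𝕜 V : Type*} [Fintype ι] [RCLike 𝕜] [NormedAddCommGroup V] [InnerProductSpace 𝕜 V]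

theorem re_inner_apply_self_eq_sum (b : OrthonormalBasis ι 𝕜 V) {T : V →ₗ[𝕜] V} {α : ι → ℝ}
    (hT : ∀ i, T (b i) = (α i : 𝕜) • b i) (x : V) :
    RCLike.re ⟪x, T x⟫_𝕜 = ∑ i, ‖⟪b i, x⟫_𝕜‖ ^ 2 * α i := by
  conv_lhs => rw [← b.sum_repr' x, map_sum, b.sum_repr' x, inner_sum, map_sum]
  refine Finset.sum_congr rfl fun i _ => ?_
  rw [map_smul, hT, inner_smul_right, inner_smul_right, mul_left_comm, RCLike.re_ofReal_mul,
    inner_mul_symm_re_eq_norm, norm_mul, norm_inner_symm x, ← sq, mul_comm]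

theorem re_inner_apply_self_mem_of_mem_span (b : OrthonormalBasis ι 𝕜 V) {T : V →ₗ[𝕜] V}
    {α : ι → ℝ} (hT : ∀ i, T (b i) = (α i : 𝕜) • b i) {K : Set ℝ} (hK : Convex ℝ K) {s : Finset ι}
    (hs : ∀ i ∈ s, α i ∈ K) {x : V} (hx : x ∈ Submodule.span 𝕜 (b '' s)) (hx1 : ‖x‖ = 1) :
    RCLike.re ⟪x, T x⟫_𝕜 ∈ K := by
  have hzero : ∀ i ∉ s, ‖⟪b i, x⟫_𝕜‖ ^ 2 = 0 := by
    intro i hi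
    have : ⟪b i, x⟫_𝕜 = 0 := by
      have hle : Submodule.span 𝕜 (b '' s) ≤ (𝕜 ∙ b i)ᗮ := by
        rw [Submodule.span_le]
        rintro _ ⟨j, hj, rfl⟩
        exact Submodule.mem_orthogonal_singleton_iff_inner_right.2
          (b.orthonormal.2 fun h => hi (h ▸ hj))
      exact Submodule.mem_orthogonal_singleton_iff_inner_right.1 (hle hx)
    rw [this, norm_zero, zero_pow two_ne_zero]
  have hsum : ∑ i ∈ s, ‖⟪b i, x⟫_𝕜‖ ^ 2 = 1 := by
    rw [Finset.sum_subset s.subset_univ fun i _ => hzero i, b.sum_sq_norm_inner_right, hx1, one_pow]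
  rw [re_inner_apply_self_eq_sum b hT,
    ← Finset.sum_subset s.subset_univ fun i _ hi => by rw [hzero i hi, zero_mul]]
  exact hK.sum_mem (fun i _ => sq_nonneg _) hsum hs

theorem exists_norm_eq_one_mem_inf [FiniteDimensional 𝕜 V] {U W : Submodule 𝕜 V}
    (h : Module.finrank 𝕜 V < Module.finrank 𝕜 U + Module.finrank 𝕜 W) :
    ∃ x ∈ U ⊓ W, ‖x‖ = 1 := by
  have hne : U ⊓ W ≠ ⊥ := fun hbot =>
    h.not_ge (Submodule.finrank_add_finrank_le_of_disjoint (disjoint_iff.2 hbot))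
  obtain ⟨x, hx, hx0⟩ := Submodule.exists_mem_ne_zero_of_ne_bot hne
  exact ⟨(‖x‖⁻¹ : 𝕜) • x, Submodule.smul_mem _ _ hx, norm_smul_inv_norm hx0⟩

-- If the inequality failed, a unit vector would lie both in the span of the `c i` with `t ≤ γ i`
-- and in the span of the `b i` with `g (α i) < t`.
theorem card_le_card_of_re_inner_le (b c : OrthonormalBasis ι 𝕜 V) {T R : V →ₗ[𝕜] V} {α γ : ι → ℝ}
    (hT : ∀ i, T (b i) = (α i : 𝕜) • b i) (hR : ∀ i, R (c i) = (γ i : 𝕜) • c i) {S : Set ℝ}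
    {g : ℝ → ℝ} (hg : QuasiconvexOn ℝ S g) (hα : ∀ i, α i ∈ S)
    (hle : ∀ x, ‖x‖ = 1 → RCLike.re ⟪x, R x⟫_𝕜 ≤ g (RCLike.re ⟪x, T x⟫_𝕜)) (t : ℝ) :
    ({i | t ≤ γ i} : Finset ι).card ≤ ({i | t ≤ g (α i)} : Finset ι).card := by
  by_contra! hlt
  have : FiniteDimensional 𝕜 V := b.toBasis.finiteDimensional_of_finite
  have hdim : Module.finrank 𝕜 V <
      Module.finrank 𝕜 (Submodule.span 𝕜 (c '' ({i | t ≤ γ i} : Finset ι))) +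
      Module.finrank 𝕜 (Submodule.span 𝕜 (b '' ({i | ¬ t ≤ g (α i)} : Finset ι))) := by
    rw [finrank_span_image_of_linearIndependent c.orthonormal.linearIndependent,
      finrank_span_image_of_linearIndependent b.orthonormal.linearIndependent,
      Module.finrank_eq_card_basis b.toBasis, ← Finset.card_univ,
      ← Finset.card_filter_add_card_filter_not (s := Finset.univ) fun i => t ≤ g (α i)]
    omega
  obtain ⟨x, ⟨hxc, hxb⟩, hx1⟩ := exists_norm_eq_one_mem_inf hdim
  have hxR : t ≤ RCLike.re ⟪x, R x⟫_𝕜 :=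
    re_inner_apply_self_mem_of_mem_span c hR (convex_Ici t)
      (fun i hi => (Finset.mem_filter.1 hi).2) hxc hx1
  have hxT : g (RCLike.re ⟪x, T x⟫_𝕜) < t :=
    (re_inner_apply_self_mem_of_mem_span b hT (hg.convex_lt t)
      (fun i hi => ⟨hα i, not_le.1 (Finset.mem_filter.1 hi).2⟩) hxb hx1).2
  exact (hxR.trans (hle x hx1)).not_gt hxT

end RayleighQuotient

theorem exists_perm_forall_le_of_card_le_card {ι α : Type*} [Fintype ι] [LinearOrder α]
    {u v : ι → α} (h : ∀ t, ({i | t ≤ u i} : Finset ι).card ≤ ({i | t ≤ v i} : Finset ι).card) :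
    ∃ ρ : Equiv.Perm ι, ∀ i, u i ≤ v (ρ i) := by
  classical
  obtain ⟨ρ, hinj, hρ⟩ := (Finset.all_card_le_biUnion_card_iff_exists_injective
    fun i => ({j | u i ≤ v j} : Finset ι)).1 fun s => by
      rcases s.eq_empty_or_nonempty with rfl | hs
      · simp
      obtain ⟨i, hi, hmin⟩ := s.exists_min_image u hs
      calc s.card ≤ ({j | u i ≤ u j} : Finset ι).card :=
            Finset.card_le_card fun j hj => Finset.mem_filter.2 ⟨Finset.mem_univ j, hmin j hj⟩
        _ ≤ ({j | u i ≤ v j} : Finset ι).card := h (u i)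
        _ ≤ _ := Finset.card_le_card (Finset.subset_biUnion_of_mem
            (fun i => ({j | u i ≤ v j} : Finset ι)) hi)
  exact ⟨Equiv.ofBijective ρ (Finite.injective_iff_bijective.1 hinj),
    fun i => (Finset.mem_filter.1 (hρ i)).2⟩

section Jensen

variable {A : Type*} {q : A → Prop} [Ring A] [StarRing A] [TopologicalSpace A] [Algebra ℝ A]
  [ContinuousFunctionalCalculus ℝ A q] {a : A}

theorem cfc_eq_sum_indicator_of_finite_spectrum (hfin : (spectrum ℝ a).Finite) (F : ℝ → ℝ) :
    cfc F a = ∑ t ∈ hfin.toFinset, F t • cfc (indicator {t} fun _ => (1 : ℝ)) a := by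
  have hcont : ∀ F : ℝ → ℝ, ContinuousOn F (spectrum ℝ a) := fun F => hfin.continuousOn F
  simp only [← cfc_const_mul _ _ a (hcont _)]
  rw [← cfc_sum _ a _ fun _ _ => hcont _]
  refine cfc_congr fun s hs => ?_
  simp [indicator, hs]

theorem cfc_comp_of_finite_spectrum [ContinuousMap.UniqueHom ℝ A] (ha : q a)
    (hfin : (spectrum ℝ a).Finite) (F G : ℝ → ℝ) :
    cfc F (cfc G a) = cfc (fun t => F (G t)) a :=
  (cfc_comp' F G a ((hfin.image G).continuousOn F) (hfin.continuousOn G) ha).symm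

variable [PartialOrder A] [StarOrderedRing A] {φ : A →ₗ[ℝ] ℝ}

theorem exists_weights_map_cfc (hφ : ∀ x, 0 ≤ x → 0 ≤ φ x) (hφ1 : φ 1 = 1) (ha : q a)
    (hfin : (spectrum ℝ a).Finite) :
    ∃ w : ℝ → ℝ, (∀ t, 0 ≤ w t) ∧ ∑ t ∈ hfin.toFinset, w t = 1 ∧
      ∀ F : ℝ → ℝ, φ (cfc F a) = ∑ t ∈ hfin.toFinset, w t * F t := by
  have hw : ∀ F : ℝ → ℝ, φ (cfc F a) =
      ∑ t ∈ hfin.toFinset, φ (cfc (indicator {t} fun _ => (1 : ℝ)) a) * F t := by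
    intro F
    rw [cfc_eq_sum_indicator_of_finite_spectrum hfin F, map_sum]
    exact Finset.sum_congr rfl fun t _ => by rw [map_smul, smul_eq_mul, mul_comm]
  refine ⟨_, fun t => hφ _ (cfc_nonneg fun _ _ => ?_), ?_, hw⟩
  · exact indicator_nonneg (fun _ _ => zero_le_one) _
  · simpa only [mul_one, cfc_const_one ℝ a ha, hφ1] using (hw fun _ => 1).symm

theorem map_mem_of_spectrum_subset (hφ : ∀ x, 0 ≤ x → 0 ≤ φ x) (hφ1 : φ 1 = 1) (ha : q a)
    (hfin : (spectrum ℝ a).Finite) {S : Set ℝ} (hS : Convex ℝ S) (haS : spectrum ℝ a ⊆ S) :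
    φ a ∈ S := by
  obtain ⟨w, hw0, hw1, hw⟩ := exists_weights_map_cfc hφ hφ1 ha hfin
  rw [← cfc_id' ℝ a ha, hw]
  exact hS.sum_mem (fun t _ => hw0 t) hw1 fun t ht => haS (hfin.mem_toFinset.1 ht)

theorem map_cfc_le_of_concaveOn (hφ : ∀ x, 0 ≤ x → 0 ≤ φ x) (hφ1 : φ 1 = 1) (ha : q a)
    (hfin : (spectrum ℝ a).Finite) {S : Set ℝ} {g : ℝ → ℝ} (hg : ConcaveOn ℝ S g)
    (haS : spectrum ℝ a ⊆ S) : φ (cfc g a) ≤ g (φ a) := by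
  obtain ⟨w, hw0, hw1, hw⟩ := exists_weights_map_cfc hφ hφ1 ha hfin
  have hφa : φ a = ∑ t ∈ hfin.toFinset, w t * t := by rw [← hw, cfc_id' ℝ a ha]
  rw [hw, hφa]
  exact hg.le_map_sum (fun t _ => hw0 t) hw1 fun t ht => haS (hfin.mem_toFinset.1 ht)

end Jensen

section HermitianMatrix

open scoped MatrixOrder InnerProductSpace
open Matrix

variable {ι κ 𝕜 : Type*} [Fintype ι] [Fintype κ] [DecidableEq ι] [DecidableEq κ] [RCLike 𝕜]

/-- The quadratic form `A ↦ re ⟪x, A x⟫` as a functional of the matrix; it is the vector state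
of `x` when `‖x‖ = 1`. -/
noncomputable def vectorState (x : EuclideanSpace 𝕜 ι) : Matrix ι ι 𝕜 →ₗ[ℝ] ℝ where
  toFun A := RCLike.re ⟪x, A.toEuclideanLin x⟫_𝕜
  map_add' A B := by simp [inner_add_right]
  map_smul' r A := by
    rw [RCLike.real_smul_eq_coe_smul (K := 𝕜) r A, map_smul, LinearMap.smul_apply,
      inner_smul_right, RCLike.re_ofReal_mul, RingHom.id_apply, smul_eq_mul]

theorem vectorState_nonneg (x : EuclideanSpace 𝕜 ι) {A : Matrix ι ι 𝕜} (hA : A.PosSemidef) :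
    0 ≤ vectorState x A :=
  (Matrix.isPositive_toEuclideanLin_iff.2 hA).re_inner_nonneg_right x

theorem vectorState_one (x : EuclideanSpace 𝕜 ι) : vectorState x 1 = ‖x‖ ^ 2 := by
  simp [vectorState]

theorem toEuclideanLin_eigenvectorBasis {A : Matrix ι ι 𝕜} (hA : A.IsHermitian) (i : ι) :
    A.toEuclideanLin (hA.eigenvectorBasis i) = (hA.eigenvalues i : 𝕜) • hA.eigenvectorBasis i := by
  ext j
  rw [toLpLin_apply, hA.mulVec_eigenvectorBasis, RCLike.real_smul_eq_coe_smul (K := 𝕜)]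
  rfl

theorem vectorState_eigenvectorBasis {A : Matrix ι ι 𝕜} (hA : A.IsHermitian) (i : ι) :
    vectorState (hA.eigenvectorBasis i) A = hA.eigenvalues i := by
  change RCLike.re ⟪_, A.toEuclideanLin _⟫_𝕜 = _
  rw [toEuclideanLin_eigenvectorBasis, inner_smul_right, RCLike.re_ofReal_mul,
    inner_self_eq_norm_sq, hA.eigenvectorBasis.norm_eq_one, one_pow, mul_one]

variable {E : Matrix ι ι 𝕜 →ₗ[ℝ] Matrix κ κ 𝕜}

theorem vectorState_map_mem (hpos : ∀ A, A.PosSemidef → (E A).PosSemidef) (hunital : E 1 = 1)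
    {A : Matrix ι ι 𝕜} (hA : A.IsHermitian) {S : Set ℝ} (hS : Convex ℝ S)
    (hAS : spectrum ℝ A ⊆ S) {x : EuclideanSpace 𝕜 κ} (hx : ‖x‖ = 1) :
    vectorState x (E A) ∈ S := by
  refine map_mem_of_spectrum_subset (φ := (vectorState x).comp E) (fun B hB => ?_) ?_
    hA.isSelfAdjoint A.finite_real_spectrum hS hAS
  · exact vectorState_nonneg x (hpos B (Matrix.nonneg_iff_posSemidef.1 hB))
  · rw [LinearMap.comp_apply, hunital, vectorState_one, hx, one_pow]

theorem eigenvalues_map_mem (hpos : ∀ A, A.PosSemidef → (E A).PosSemidef) (hunital : E 1 = 1)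
    {A : Matrix ι ι 𝕜} (hA : A.IsHermitian) {S : Set ℝ} (hS : Convex ℝ S)
    (hAS : spectrum ℝ A ⊆ S) (hEA : (E A).IsHermitian) (i : κ) : hEA.eigenvalues i ∈ S :=
  vectorState_eigenvectorBasis hEA i ▸
    vectorState_map_mem hpos hunital hA hS hAS (hEA.eigenvectorBasis.norm_eq_one i)

theorem vectorState_map_cfc_le (hpos : ∀ A, A.PosSemidef → (E A).PosSemidef) (hunital : E 1 = 1)
    {A : Matrix ι ι 𝕜} (hA : A.IsHermitian) {S : Set ℝ} {g : ℝ → ℝ} (hg : ConcaveOn ℝ S g)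
    (hAS : spectrum ℝ A ⊆ S) {x : EuclideanSpace 𝕜 κ} (hx : ‖x‖ = 1) :
    vectorState x (E (cfc g A)) ≤ g (vectorState x (E A)) := by
  refine map_cfc_le_of_concaveOn (φ := (vectorState x).comp E) (fun B hB => ?_) ?_
    hA.isSelfAdjoint A.finite_real_spectrum hg hAS
  · exact vectorState_nonneg x (hpos B (Matrix.nonneg_iff_posSemidef.1 hB))
  · rw [LinearMap.comp_apply, hunital, vectorState_one, hx, one_pow]

theorem exists_perm_eigenvalues_map_cfc_le (hpos : ∀ A, A.PosSemidef → (E A).PosSemidef)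
    (hunital : E 1 = 1) {A : Matrix ι ι 𝕜} (hA : A.IsHermitian) {S : Set ℝ} {g : ℝ → ℝ}
    (hg : ConcaveOn ℝ S g) (hg' : QuasiconvexOn ℝ S g) (hAS : spectrum ℝ A ⊆ S)
    (hB : (E A).IsHermitian) (hC : (E (cfc g A)).IsHermitian) :
    ∃ ρ : Equiv.Perm κ, ∀ i, hC.eigenvalues i ≤ g (hB.eigenvalues (ρ i)) :=
  exists_perm_forall_le_of_card_le_card <| card_le_card_of_re_inner_le hB.eigenvectorBasis
    hC.eigenvectorBasis (toEuclideanLin_eigenvectorBasis hB) (toEuclideanLin_eigenvectorBasis hC)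
    hg' (eigenvalues_map_mem hpos hunital hA hg.1 hAS hB)
    fun _ hx => vectorState_map_cfc_le hpos hunital hA hg hAS hx

theorem exists_unitary_cfc_eq_mul_diagonal_mul_star {A : Matrix κ κ 𝕜} (hA : A.IsHermitian)
    (σ : Equiv.Perm κ) :
    ∃ U ∈ unitaryGroup κ 𝕜, ∀ F : ℝ → ℝ,
      cfc F A = U * diagonal (fun i => (F (hA.eigenvalues (σ i)) : 𝕜)) * star U := by
  let U₀ : Matrix κ κ 𝕜 := hA.eigenvectorUnitary
  have hU₀ : star U₀ * U₀ = 1 := mem_unitaryGroup_iff'.1 hA.eigenvectorUnitary.2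
  refine ⟨U₀.submatrix id σ, mem_unitaryGroup_iff'.2 ?_, fun F => ?_⟩
  · rw [star_eq_conjTranspose, conjTranspose_submatrix,
      ← submatrix_mul _ _ _ _ _ Function.bijective_id, ← star_eq_conjTranspose, hU₀,
      submatrix_one_equiv]
  · have hdiag : diagonal (fun i => (F (hA.eigenvalues (σ i)) : 𝕜)) =
        (diagonal fun i => (F (hA.eigenvalues i) : 𝕜)).submatrix σ σ :=
      (submatrix_diagonal_equiv (fun i => (F (hA.eigenvalues i) : 𝕜)) σ).symm
    rw [hdiag, star_eq_conjTranspose, conjTranspose_submatrix, submatrix_mul_equiv,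
      submatrix_mul_equiv, submatrix_id_id, hA.cfc_eq, IsHermitian.cfc,
      Unitary.conjStarAlgAut_apply]
    rfl

theorem exists_unitary_posSemidef_sub_conj_cfc {B C : Matrix κ κ 𝕜} (hB : B.IsHermitian)
    (hC : C.IsHermitian) {F G : ℝ → ℝ} {ρ : Equiv.Perm κ}
    (hle : ∀ i, F (hC.eigenvalues i) ≤ G (hB.eigenvalues (ρ i))) :
    ∃ V ∈ unitaryGroup κ 𝕜, (cfc G B - V * cfc F C * star V).PosSemidef := by
  obtain ⟨U, hU, hUB⟩ := exists_unitary_cfc_eq_mul_diagonal_mul_star hB ρ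
  obtain ⟨W, hW, hWC⟩ := exists_unitary_cfc_eq_mul_diagonal_mul_star hC (Equiv.refl κ)
  have hWW : star W * W = 1 := mem_unitaryGroup_iff'.1 hW
  refine ⟨U * star W, mul_mem hU (Unitary.star_mem hW), ?_⟩
  have hconj : ∀ D : Matrix κ κ 𝕜,
      U * star W * (W * D * star W) * star (U * star W) = U * D * star U := by
    intro D
    calc U * star W * (W * D * star W) * star (U * star W)
        = U * (star W * W) * D * (star W * W) * star U := by
          simp only [star_mul, star_star, mul_assoc]
      _ = U * D * star U := by rw [hWW, mul_one, mul_one]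
  rw [hUB, hWC, hconj, ← sub_mul, ← mul_sub, diagonal_sub]
  refine PosSemidef.mul_mul_conjTranspose_same (PosSemidef.diagonal fun i => ?_) U
  exact sub_nonneg.2 (RCLike.ofReal_le_ofReal.2 (hle i))

theorem posSemidef_cfc {A : Matrix ι ι 𝕜} {F : ℝ → ℝ} (hF : ∀ t ∈ spectrum ℝ A, 0 ≤ F t) :
    (cfc F A).PosSemidef :=
  Matrix.nonneg_iff_posSemidef.1 (cfc_nonneg hF)

variable {A : Matrix ι ι 𝕜} {p : ℝ}

theorem spectrum_cfc_rpow_subset (hp : p ≠ 0) (hA : A.IsHermitian) {Ω : Set ℝ}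
    (hΩ : Ω ⊆ Ici 0) (hAΩ : spectrum ℝ A ⊆ Ω) :
    spectrum ℝ (cfc (fun x : ℝ => x ^ p) A) ⊆ rpowDomain p Ω := by
  rw [cfc_map_spectrum (fun x : ℝ => x ^ p) A hA.isSelfAdjoint
    (A.finite_real_spectrum.continuousOn _)]
  rintro _ ⟨x, hx, rfl⟩
  exact rpow_mem_rpowDomain hp (hΩ (hAΩ hx)) (hAΩ hx)

theorem cfc_rpowConj_cfc_rpow (hp : p ≠ 0) (hA : A.IsHermitian) (hA0 : spectrum ℝ A ⊆ Ici 0)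
    (f : ℝ → ℝ) :
    cfc (rpowConj p f) (cfc (fun x : ℝ => x ^ p) A) = cfc (fun x => f x ^ p) A := by
  rw [cfc_comp_of_finite_spectrum hA.isSelfAdjoint A.finite_real_spectrum]
  exact cfc_congr fun x hx => rpowConj_rpow hp (hA0 hx)

end HermitianMatrix

section PowerMeanMap

variable {n m : ℕ} {E : Matrix (Fin n) (Fin n) ℂ →ₗ[ℂ] Matrix (Fin m) (Fin m) ℂ} {p : ℝ}
  {Z : Matrix (Fin n) (Fin n) ℂ}

theorem cfc_Ep (hE : (E (cfc (fun x : ℝ => x ^ p) Z)).IsHermitian) (f : ℝ → ℝ) :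
    cfc f (Ep E p Z) = cfc (fun t : ℝ => f (t ^ (1 / p))) (E (cfc (fun x : ℝ => x ^ p) Z)) :=
  cfc_comp_of_finite_spectrum hE.isSelfAdjoint Matrix.finite_real_spectrum f _

theorem Ep_cfc (hZ : Z.IsHermitian) (f : ℝ → ℝ) :
    Ep E p (cfc f Z) = cfc (fun t : ℝ => t ^ (1 / p)) (E (cfc (fun x => f x ^ p) Z)) := by
  rw [Ep, cfc_comp_of_finite_spectrum hZ.isSelfAdjoint Z.finite_real_spectrum]

end PowerMeanMap

theorem stmt_2 {n m : ℕ} (E : Matrix (Fin n) (Fin n) ℂ →ₗ[ℂ] Matrix (Fin m) (Fin m) ℂ)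
    (hpos : ∀ A : Matrix (Fin n) (Fin n) ℂ, A.PosSemidef → (E A).PosSemidef)
    (hunital : E 1 = 1)
    (f : ℝ → ℝ) (Ω : Set ℝ) (hf : DoublyConcaveOn f Ω)
    (hmono : MonotoneOn f Ω ∨ AntitoneOn f Ω)
    (Z : Matrix (Fin n) (Fin n) ℂ) (hZ : Z.IsHermitian) (hΩ : spectrum ℝ Z ⊆ Ω)
    (p : ℝ) (hp0 : 0 < p) (hp1 : p ≤ 1) :
    ∃ V ∈ Matrix.unitaryGroup (Fin m) ℂ,
      (cfc f (Ep E p Z) - V * Ep E p (cfc f Z) * star V).PosSemidef := by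
  let S := rpowDomain p Ω
  let g := rpowConj p f
  have hg : ConcaveOn ℝ S g := hf.concaveOn_rpowConj hp0 hp1
  have hA := posSemidef_cfc fun x hx => Real.rpow_nonneg (hf.subset_Ici (hΩ hx)) p
  have hAS := spectrum_cfc_rpow_subset hp0.ne' hZ hf.subset_Ici hΩ
  have hgA := cfc_rpowConj_cfc_rpow hp0.ne' hZ (hΩ.trans hf.subset_Ici) f
  have hB := hpos _ hA
  have hC := hpos _ (posSemidef_cfc fun x hx => Real.rpow_nonneg (hf.nonneg x (hΩ hx)) p)
  rw [cfc_Ep hB.1, Ep_cfc hZ]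
  rw [← hgA] at hC ⊢
  obtain ⟨ρ, hρ⟩ := exists_perm_eigenvalues_map_cfc_le (E := E.restrictScalars ℝ) hpos hunital
    hA.1 hg (hf.quasiconvexOn_rpowConj hp0 hmono) hAS hB.1 hC.1
  have hBS := eigenvalues_map_mem (E := E.restrictScalars ℝ) hpos hunital hA.1 hg.1 hAS hB.1
  refine exists_unitary_posSemidef_sub_conj_cfc (ρ := ρ) hB.1 hC.1 fun i => ?_
  calc hC.1.eigenvalues i ^ (1 / p) ≤ g (hB.1.eigenvalues (ρ i)) ^ (1 / p) :=
        Real.rpow_le_rpow (hC.eigenvalues_nonneg i) (hρ i) (by positivity)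
    _ = f (hB.1.eigenvalues (ρ i) ^ (1 / p)) := hf.rpowConj_rpow_one_div hp0.ne' (hBS _)
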